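/- arXiv:2604.25461 — 2 statements merged into one kernel-verified Lean document; each statement's English description precedes it below -/
import Mathlib

section
/- Let q = 2^n with n ≥ 1, take r = 2, k = q + 1, and 0 ≤ a,b ≤ q−2. Put c = 1 + ω^{ak} + ω^{bk} ∈ 𝔽_q. Then (a,b)_{q−1} = 1 if c = 0; (a,b)_{q−1} = 0 if c ≠ 0 and Tr_{𝔽_q/𝔽_2}(ω^{ak}/c^2) = 0; and (a,b)_{q−1} = 2 if c ≠ 0 and Tr_{𝔽_q/𝔽_2}(ω^{ak}/c^2) = 1. -/
/-- `x` lies in the cyclotomic coset `C_a = ω^a ⟨ω^e⟩` of `Fˣ`. -/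
def InCycCoset {F : Type*} [Field F] (ω : Fˣ) (e a : ℕ) (x : Fˣ) : Prop :=
  ∃ m : ℕ, x = ω ^ a * (ω ^ e) ^ m

/-- The cyclotomic number `(a,b)_e` : the number of `x ∈ C_a` with `x + 1 ∈ C_b`. -/
noncomputable def cycNum {F : Type*} [Field F] (ω : Fˣ) (e a b : ℕ) : ℕ :=
  Nat.card {x : Fˣ | InCycCoset ω e a x ∧ ∃ y : Fˣ, InCycCoset ω e b y ∧ (y : F) = (x : F) + 1}

/-!
The coset `C_a` is a fibre of the norm: `x ∈ C_a` iff `N x = N ω ^ a`. In a quadratic extension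
`N (x + 1) = N x + Tr x + 1`, so `(a,b)_{q-1}` counts the `x` of norm `A = N ω ^ a` and trace
`N ω ^ b - N ω ^ a - 1`, which in characteristic two is `c`. Such an `x` is a root of
`X ^ 2 - c X + A`. If `c = 0` the only candidate is the square root of `A`. If `c ≠ 0`, then
`y = x / c` is a root of the Artin–Schreier polynomial `Y ^ 2 - Y + A / c ^ 2`, which splits in
`F` by additive Hilbert 90; telescoping shows that each root has trace `Tr (A / c ^ 2)` over `K`,
so either both roots count or none does.
-/

open Module

section QuadraticExtension

section CommRing

variable {R S : Type*} [CommRing R] [StrongRankCondition R] [CommRing S] [Algebra R S]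
  [Algebra.IsQuadraticExtension R S]

variable (R S) in
lemma nonempty_basis_fin_two : Nonempty (Basis (Fin 2) R S) :=
  have : Module.Finite R S :=
    finite_of_finrank_pos (by simp [Algebra.IsQuadraticExtension.finrank_eq_two R S])
  ⟨finBasisOfFinrankEq R S (Algebra.IsQuadraticExtension.finrank_eq_two R S)⟩

variable (R) in
lemma norm_add_one_eq_norm_add_trace_add_one (x : S) :
    Algebra.norm R (x + 1) = Algebra.norm R x + Algebra.trace R S x + 1 := by
  obtain ⟨basis⟩ := nonempty_basis_fin_two R S
  simp only [Algebra.norm_eq_matrix_det basis, Algebra.trace_eq_matrix_trace basis, map_add,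
    map_one, Matrix.det_fin_two, Matrix.trace_fin_two, Matrix.add_apply, Matrix.one_apply_eq,
    Matrix.one_apply_ne zero_ne_one, Matrix.one_apply_ne one_ne_zero]
  ring

variable (R) in
lemma sq_eq_trace_mul_sub_norm (x : S) :
    x ^ 2 = algebraMap R S (Algebra.trace R S x) * x - algebraMap R S (Algebra.norm R x) := by
  obtain ⟨basis⟩ := nonempty_basis_fin_two R S
  apply Algebra.leftMulMatrix_injective basis
  rw [Algebra.norm_eq_matrix_det basis, Algebra.trace_eq_matrix_trace basis, map_sub, map_mul,
    map_pow, AlgHom.commutes, AlgHom.commutes]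
  ext i j
  fin_cases i <;> fin_cases j <;>
    simp [sq, Matrix.mul_apply, Matrix.det_fin_two, Matrix.trace_fin_two,
      Matrix.algebraMap_matrix_apply] <;> ring

end CommRing

variable {K F : Type*} [Field K] [Field F] [Algebra K F]

variable (F) in
/-- The elements of `F` of norm `d` and trace `t` over `K`, whose number is
the cyclotomic number for suitable `d` and `t`. -/
def normTraceFiber (d t : K) : Set F :=
  {x | Algebra.norm K x = d ∧ Algebra.trace K F x = t}

variable [Algebra.IsQuadraticExtension K F]

lemma mem_normTraceFiber_iff_sq_eq {x : F} {d t : K} :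
    x ∈ normTraceFiber F d t ↔
      x ^ 2 = algebraMap K F t * x - algebraMap K F d ∧ Algebra.trace K F x = t := by
  refine and_congr_left fun trace_eq => ?_
  rw [sq_eq_trace_mul_sub_norm K x, trace_eq, sub_right_inj, (algebraMap K F).injective.eq_iff]

variable (F) in
lemma ncard_normTraceFiber_eq_ncard_div_sq (d : K) {t : K} (ht : t ≠ 0) :
    (normTraceFiber F d t).ncard = (normTraceFiber F (d / t ^ 2) 1).ncard := by
  have eq_image_smul : normTraceFiber F d t = (t • ·) '' normTraceFiber F (d / t ^ 2) 1 := by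
    ext x
    have norm_inv_smul : Algebra.norm K (t⁻¹ • x) = (t ^ 2)⁻¹ * Algebra.norm K x := by
      rw [Algebra.smul_def, map_mul, Algebra.norm_algebraMap,
        Algebra.IsQuadraticExtension.finrank_eq_two, inv_pow]
    have trace_inv_smul : Algebra.trace K F (t⁻¹ • x) = t⁻¹ * Algebra.trace K F x :=
      map_smul _ _ _
    rw [Set.image_smul, Set.mem_smul_set_iff_inv_smul_mem₀ ht]
    simp only [normTraceFiber, Set.mem_ofPred_eq, norm_inv_smul, trace_inv_smul]
    rw [inv_mul_eq_iff_eq_mul₀ ht, mul_one, inv_mul_eq_iff_eq_mul₀ (pow_ne_zero 2 ht),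
      mul_div_cancel₀ _ (pow_ne_zero 2 ht)]
  rw [eq_image_smul, Set.ncard_image_of_injective _ (smul_right_injective F ht)]

variable (F) in
lemma ncard_normTraceFiber_zero_of_charTwo [CharP K 2] [PerfectRing K 2] (d : K) :
    (normTraceFiber F d 0).ncard = 1 := by
  have : CharP F 2 := charP_of_injective_algebraMap' K 2
  obtain ⟨s, rfl⟩ := surjective_frobenius K 2 d
  refine Set.ncard_eq_one.2 ⟨algebraMap K F s, Set.ext fun x => ?_⟩
  rw [mem_normTraceFiber_iff_sq_eq, map_zero, zero_mul, zero_sub,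
    CharTwo.neg_eq, frobenius_def, map_pow, Set.mem_singleton_iff, CharTwo.sq_inj]
  refine and_iff_left_of_imp ?_
  rintro rfl
  rw [Algebra.trace_algebraMap, Algebra.IsQuadraticExtension.finrank_eq_two, CharTwo.two_nsmul]

end QuadraticExtension

section FiniteField

variable {K F : Type*} [Field K] [Field F] [Algebra K F]

section

variable [Finite K]

variable (K F) in
/-- The `K`-linear Artin–Schreier map `y ↦ y ^ q - y`, where `q` is the cardinality of `K`; for
finite `F` its image is the kernel of the trace. -/
noncomputable def artinSchreierMap : F →ₗ[K] F :=
  letI := Fintype.ofFinite K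
  (FiniteField.frobeniusAlgHom K F).toLinearMap - LinearMap.id

lemma artinSchreierMap_apply (y : F) :
    artinSchreierMap K F y = y ^ Nat.card K - y := by
  let := Fintype.ofFinite K
  rw [Nat.card_eq_fintype_card]
  rfl

end

variable [Finite F]

lemma isQuadraticExtension_of_natCard_eq_sq (h : Nat.card F = Nat.card K ^ 2) :
    Algebra.IsQuadraticExtension K F where
  finrank_eq_two' := by
    have := Finite.of_injective _ (algebraMap K F).injective
    rw [natCard_eq_pow_finrank (K := K)] at h
    exact Nat.pow_right_injective Finite.one_lt_card h

lemma exists_algebraMap_eq_of_pow_card_eq {x : F} (hx : x ^ Nat.card K = x) :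
    ∃ s : K, algebraMap K F s = x := by
  have := Finite.of_injective _ (algebraMap K F).injective
  have := Fintype.ofFinite K
  refine IntermediateField.mem_bot.1 ((IsGalois.mem_bot_iff_fixed x).2 fun g => ?_)
  obtain ⟨i, rfl⟩ := (FiniteField.bijective_frobeniusAlgEquivOfAlgebraic_pow K F).2 g
  have frobenius_fixes : FiniteField.frobeniusAlgEquivOfAlgebraic K F x = x := by
    simpa [← Nat.card_eq_fintype_card] using hx
  rw [AlgEquiv.coe_pow]
  exact Function.iterate_fixed frobenius_fixes i

lemma trace_pow_card (y : F) :
    Algebra.trace K F (y ^ Nat.card K) = Algebra.trace K F y := by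
  have := Finite.of_injective _ (algebraMap K F).injective
  have := Fintype.ofFinite K
  simpa [← Nat.card_eq_fintype_card] using
    Algebra.trace_eq_of_algEquiv (FiniteField.frobeniusAlgEquivOfAlgebraic K F) y

lemma finrank_ker_artinSchreierMap_le_one [Finite K] :
    finrank K (artinSchreierMap K F).ker ≤ 1 := by
  refine finrank_le_one ⟨1, by simp [artinSchreierMap_apply]⟩ fun ⟨y, hy⟩ => ?_
  rw [LinearMap.mem_ker, artinSchreierMap_apply, sub_eq_zero] at hy
  obtain ⟨s, rfl⟩ := exists_algebraMap_eq_of_pow_card_eq hy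
  exact ⟨s, Subtype.ext (Algebra.algebraMap_eq_smul_one s).symm⟩

theorem range_artinSchreierMap [Finite K] :
    (artinSchreierMap K F).range = (Algebra.trace K F).ker := by
  apply Submodule.eq_of_le_of_finrank_le
  · rintro _ ⟨y, rfl⟩
    rw [LinearMap.mem_ker, artinSchreierMap_apply, map_sub, trace_pow_card, sub_self]
  · have finrank_range_trace : finrank K (Algebra.trace K F).range = 1 := by
      rw [LinearMap.range_eq_top.2 (Algebra.trace_surjective K F), finrank_top, finrank_self]
    have := finrank_ker_artinSchreierMap_le_one (K := K) (F := F)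
    have := (artinSchreierMap K F).finrank_range_add_finrank_ker
    have := (Algebra.trace K F).finrank_range_add_finrank_ker
    omega

lemma exists_pow_card_sub_eq_of_trace_eq_zero {d : F} (hd : Algebra.trace K F d = 0) :
    ∃ y : F, y ^ Nat.card K - y = d := by
  have := Finite.of_injective _ (algebraMap K F).injective
  obtain ⟨y, hy⟩ : d ∈ (artinSchreierMap K F).range := by
    rwa [range_artinSchreierMap, LinearMap.mem_ker]
  exact ⟨y, by rw [← hy, artinSchreierMap_apply]⟩

lemma pow_card_sub_eq_algebraMap_trace {k : Type*} [Field k] [Algebra k K] [Algebra k F]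
    [IsScalarTower k K F] {y : F} {d : K} (hy : y ^ Nat.card k - y = algebraMap K F d) :
    y ^ Nat.card K - y = algebraMap k F (Algebra.trace k K d) := by
  have := Finite.of_injective _ (algebraMap K F).injective
  have := Finite.of_injective _ (algebraMap k K).injective
  have := Fintype.ofFinite k
  have pow_sub (i : ℕ) : (y ^ Nat.card k - y) ^ Nat.card k ^ i =
      y ^ Nat.card k ^ (i + 1) - y ^ Nat.card k ^ i := by
    have := map_sub (FiniteField.frobeniusAlgHom k F ^ i) (y ^ Nat.card k) y
    simpa only [AlgHom.coe_pow, FiniteField.coe_frobeniusAlgHom, pow_iterate, ← pow_mul,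
      ← pow_succ', ← Nat.card_eq_fintype_card] using this
  symm
  calc algebraMap k F (Algebra.trace k K d)
      = ∑ i ∈ Finset.range (finrank k K), algebraMap K F d ^ Nat.card k ^ i := by
        simp only [IsScalarTower.algebraMap_apply k K F,
          FiniteField.algebraMap_trace_eq_sum_pow, map_sum, map_pow]
    _ = ∑ i ∈ Finset.range (finrank k K),
          (y ^ Nat.card k ^ (i + 1) - y ^ Nat.card k ^ i) := by simp only [← hy, pow_sub]
    _ = y ^ Nat.card K - y := by
        rw [Finset.sum_range_sub (fun i => y ^ Nat.card k ^ i), ← natCard_eq_pow_finrank, pow_zero,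
          pow_one]

end FiniteField

section CyclotomicCoset

variable {K F : Type*} [Field K] [Field F] [Finite F] [Algebra K F] {ω : Fˣ}

variable (K) in
lemma orderOf_unitsMap_norm (hω : ∀ x : Fˣ, x ∈ Subgroup.zpowers ω) :
    orderOf (Units.map (Algebra.norm K) ω) = Nat.card K - 1 := by
  rw [← Nat.card_units]
  refine orderOf_eq_card_of_forall_mem_zpowers fun z => ?_
  obtain ⟨x, rfl⟩ := FiniteField.unitsMap_norm_surjective K F z
  rw [← MonoidHom.map_zpowers]
  exact Subgroup.mem_map_of_mem _ (hω x)

theorem inCycCoset_iff_norm_eq (hω : ∀ x : Fˣ, x ∈ Subgroup.zpowers ω) (a : ℕ) (x : Fˣ) :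
    InCycCoset ω (Nat.card K - 1) a x ↔
      Algebra.norm K (x : F) = Algebra.norm K (ω : F) ^ a := by
  have norm_eq_iff : Algebra.norm K (x : F) = Algebra.norm K (ω : F) ^ a ↔
      Units.map (Algebra.norm K) x = Units.map (Algebra.norm K) ω ^ a := by
    simp [Units.ext_iff]
  rw [norm_eq_iff, ← orderOf_unitsMap_norm K hω]
  constructor
  · rintro ⟨m, rfl⟩
    rw [map_mul, map_pow, map_pow, map_pow, pow_orderOf_eq_one, one_pow, mul_one]
  · intro map_norm_eq
    obtain ⟨j, hj : ω ^ j = (ω ^ a)⁻¹ * x⟩ := mem_powers_iff_mem_zpowers.2 (hω ((ω ^ a)⁻¹ * x))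
    obtain ⟨m, hm⟩ : orderOf (Units.map (Algebra.norm K) ω) ∣ j := by
      rw [orderOf_dvd_iff_pow_eq_one, ← map_pow, hj, map_mul, map_norm_eq, map_inv, map_pow,
        inv_mul_cancel]
    exact ⟨m, by rw [← pow_mul, ← hm, hj, mul_inv_cancel_left]⟩

theorem cycNum_eq_ncard_normTraceFiber [Algebra.IsQuadraticExtension K F]
    (hω : ∀ x : Fˣ, x ∈ Subgroup.zpowers ω) (a b : ℕ) :
    cycNum ω (Nat.card K - 1) a b =
      (normTraceFiber F (Algebra.norm K (ω : F) ^ a)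
        (Algebra.norm K (ω : F) ^ b - Algebra.norm K (ω : F) ^ a - 1)).ncard := by
  have norm_pow_ne_zero (m : ℕ) : Algebra.norm K (ω : F) ^ m ≠ 0 :=
    pow_ne_zero m (Algebra.norm_ne_zero_iff.2 ω.ne_zero)
  rw [cycNum, Nat.card_coe_set_eq, ← Set.ncard_image_of_injective _ Units.val_injective]
  congr 1
  ext x
  have norm_add_one_iff (norm_eq : Algebra.norm K x = Algebra.norm K (ω : F) ^ a) :
      Algebra.norm K (x + 1) = Algebra.norm K (ω : F) ^ b ↔ Algebra.trace K F x =
        Algebra.norm K (ω : F) ^ b - Algebra.norm K (ω : F) ^ a - 1 := by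
    rw [norm_add_one_eq_norm_add_trace_add_one, norm_eq]
    grind
  simp only [Set.mem_image, Set.mem_ofPred_eq, normTraceFiber, inCycCoset_iff_norm_eq hω]
  constructor
  · rintro ⟨x, ⟨norm_eq, y, norm_y_eq, y_eq⟩, rfl⟩
    exact ⟨norm_eq, (norm_add_one_iff norm_eq).1 (y_eq ▸ norm_y_eq)⟩
  · rintro ⟨norm_eq, trace_eq⟩
    have norm_add_one_eq := (norm_add_one_iff norm_eq).2 trace_eq
    have x_ne_zero : x ≠ 0 := Algebra.norm_ne_zero_iff.1 (norm_eq ▸ norm_pow_ne_zero a)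
    have add_one_ne_zero : x + 1 ≠ 0 :=
      Algebra.norm_ne_zero_iff.1 (norm_add_one_eq ▸ norm_pow_ne_zero b)
    exact ⟨Units.mk0 x x_ne_zero,
      ⟨norm_eq, Units.mk0 (x + 1) add_one_ne_zero, norm_add_one_eq, rfl⟩, rfl⟩

end CyclotomicCoset

section CharTwo

variable {K F : Type*} [Field K] [Field F] [Finite F] [Algebra K F]
  [Algebra.IsQuadraticExtension K F] [Algebra (ZMod 2) K]

lemma trace_eq_algebraMap_trace_of_sq_sub_eq {y : F} {d : K}
    (hy : y ^ 2 - y = algebraMap K F d) :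
    Algebra.trace K F y = algebraMap (ZMod 2) K (Algebra.trace (ZMod 2) K d) := by
  let := ((algebraMap K F).comp (algebraMap (ZMod 2) K)).toAlgebra
  have : IsScalarTower (ZMod 2) K F := .of_algebraMap_eq' rfl
  have : CharP F 2 := charP_of_injective_algebraMap' (ZMod 2) 2
  have pow_card_sub := pow_card_sub_eq_algebraMap_trace (k := ZMod 2) (by rwa [Nat.card_zmod])
  apply (algebraMap K F).injective
  rw [← IsScalarTower.algebraMap_apply, ← pow_card_sub, FiniteField.algebraMap_trace_eq_sum_pow,
    Algebra.IsQuadraticExtension.finrank_eq_two, Finset.sum_range_succ, Finset.sum_range_one,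
    pow_zero, pow_one, pow_one, CharTwo.sub_eq_add, add_comm]

variable (F) in
lemma exists_sq_sub_eq_algebraMap (d : K) : ∃ y : F, y ^ 2 - y = algebraMap K F d := by
  let := ((algebraMap K F).comp (algebraMap (ZMod 2) K)).toAlgebra
  have : IsScalarTower (ZMod 2) K F := .of_algebraMap_eq' rfl
  have : CharP K 2 := charP_of_injective_algebraMap' (ZMod 2) 2
  have := Finite.of_injective _ (algebraMap K F).injective
  have trace_eq_zero : Algebra.trace (ZMod 2) F (algebraMap K F d) = 0 := by
    rw [← Algebra.trace_trace (S := K), Algebra.trace_algebraMap,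
      Algebra.IsQuadraticExtension.finrank_eq_two, CharTwo.two_nsmul, map_zero]
  simpa only [Nat.card_zmod] using exists_pow_card_sub_eq_of_trace_eq_zero trace_eq_zero

lemma mem_normTraceFiber_one_iff {y : F} {d : K} :
    y ∈ normTraceFiber F d 1 ↔
      y ^ 2 - y = algebraMap K F d ∧ Algebra.trace (ZMod 2) K d = 1 := by
  have : CharP K 2 := charP_of_injective_algebraMap' (ZMod 2) 2
  have : CharP F 2 := charP_of_injective_algebraMap' K 2
  have sq_eq_iff : y ^ 2 = algebraMap K F 1 * y - algebraMap K F d ↔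
      y ^ 2 - y = algebraMap K F d := by
    rw [map_one, one_mul, sub_eq_iff_eq_add', CharTwo.sub_eq_add]
  rw [mem_normTraceFiber_iff_sq_eq, sq_eq_iff]
  refine and_congr_right fun hy => ?_
  rw [trace_eq_algebraMap_trace_of_sq_sub_eq hy,
    map_eq_one_iff _ (algebraMap (ZMod 2) K).injective]

variable (F) in
lemma ncard_normTraceFiber_one_of_trace_eq_zero {d : K} (hd : Algebra.trace (ZMod 2) K d = 0) :
    (normTraceFiber F d 1).ncard = 0 := by
  rw [Set.ncard_eq_zero, Set.eq_empty_iff_forall_notMem]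
  intro y hy
  exact zero_ne_one (hd.symm.trans (mem_normTraceFiber_one_iff.1 hy).2)

variable (F) in
lemma ncard_normTraceFiber_one_of_trace_eq_one {d : K} (hd : Algebra.trace (ZMod 2) K d = 1) :
    (normTraceFiber F d 1).ncard = 2 := by
  obtain ⟨y₀, hy₀⟩ := exists_sq_sub_eq_algebraMap F d
  have : CharP K 2 := charP_of_injective_algebraMap' (ZMod 2) 2
  have : CharP F 2 := charP_of_injective_algebraMap' K 2
  have sq_sub_eq_iff (y : F) : y ^ 2 - y = y₀ ^ 2 - y₀ ↔ y = y₀ ∨ y = y₀ + 1 := by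
    rw [← sub_eq_zero, ← sub_eq_zero (a := y), ← sub_eq_zero (a := y) (b := y₀ + 1),
      ← mul_eq_zero]
    suffices y ^ 2 - y - (y₀ ^ 2 - y₀) = (y - y₀) * (y - (y₀ + 1)) by rw [this]
    linear_combination (y₀ * y - y₀ ^ 2) * CharTwo.two_eq_zero (R := F)
  refine Set.ncard_eq_two.2 ⟨y₀, y₀ + 1, left_ne_add.2 one_ne_zero, Set.ext fun y => ?_⟩
  rw [mem_normTraceFiber_one_iff, and_iff_left hd, ← hy₀, sq_sub_eq_iff, Set.mem_insert_iff,
    Set.mem_singleton_iff]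

end CharTwo

theorem cycNum_r_two_char_two_general {K F : Type*} [Field K] [Field F] [Finite F] [Algebra K F]
    [Algebra.IsQuadraticExtension K F] [Algebra (ZMod 2) K]
    (ω : Fˣ) (hω : ∀ x : Fˣ, x ∈ Subgroup.zpowers ω)
    (ζ : K) (hζ : algebraMap K F ζ = (ω : F) ^ (Nat.card K + 1)) (a b : ℕ) :
    (1 + ζ ^ a + ζ ^ b = 0 → cycNum ω (Nat.card K - 1) a b = 1) ∧
    (1 + ζ ^ a + ζ ^ b ≠ 0 →
      Algebra.trace (ZMod 2) K (ζ ^ a / (1 + ζ ^ a + ζ ^ b) ^ 2) = 0 →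
      cycNum ω (Nat.card K - 1) a b = 0) ∧
    (1 + ζ ^ a + ζ ^ b ≠ 0 →
      Algebra.trace (ZMod 2) K (ζ ^ a / (1 + ζ ^ a + ζ ^ b) ^ 2) = 1 →
      cycNum ω (Nat.card K - 1) a b = 2) := by
  have := Finite.of_injective _ (algebraMap K F).injective
  have : CharP K 2 := charP_of_injective_algebraMap' (ZMod 2) 2
  have norm_eq : Algebra.norm K (ω : F) = ζ := by
    apply (algebraMap K F).injective
    rw [hζ, FiniteField.algebraMap_norm_eq_pow_sum, Algebra.IsQuadraticExtension.finrank_eq_two,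
      Finset.sum_range_succ, Finset.sum_range_one, pow_zero, pow_one, add_comm]
  have trace_eq : ζ ^ b - ζ ^ a - 1 = 1 + ζ ^ a + ζ ^ b := by
    rw [CharTwo.sub_eq_add, CharTwo.sub_eq_add]
    ring
  rw [cycNum_eq_ncard_normTraceFiber hω, norm_eq, trace_eq]
  refine ⟨fun c_eq_zero => ?_, fun c_ne_zero trace_eq_zero => ?_, fun c_ne_zero trace_eq_one => ?_⟩
  · rw [c_eq_zero, ncard_normTraceFiber_zero_of_charTwo]
  · rw [ncard_normTraceFiber_eq_ncard_div_sq F _ c_ne_zero,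
      ncard_normTraceFiber_one_of_trace_eq_zero F trace_eq_zero]
  · rw [ncard_normTraceFiber_eq_ncard_div_sq F _ c_ne_zero,
      ncard_normTraceFiber_one_of_trace_eq_one F trace_eq_one]

/-- For `q = 2^n`, `r = 2`, `k = q + 1`, and `c = 1 + ω^{ak} + ω^{bk} ∈ 𝔽_q`, the cyclotomic
number `(a,b)_{q-1}` over `𝔽_{q^2}` is `1` if `c = 0`, and otherwise `0` or `2` according as
`Tr_{𝔽_q/𝔽_2}(ω^{ak}/c^2)` is `0` or `1`. -/
theorem cycNum_r_two_char_two {n q : ℕ} (hn : 1 ≤ n) (hq : q = 2 ^ n)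
    {K F : Type*} [Field K] [Field F] [Fintype K] [Fintype F] [Algebra K F]
    [Algebra (ZMod 2) K]
    (hK : Fintype.card K = q) (hF : Fintype.card F = q ^ 2)
    (ω : Fˣ) (hω : ∀ x : Fˣ, x ∈ Subgroup.zpowers ω)
    (ζ : K) (hζ : algebraMap K F ζ = (ω : F) ^ (q + 1))
    (a b : ℕ) (ha : a ≤ q - 2) (hb : b ≤ q - 2) :
    (1 + ζ ^ a + ζ ^ b = 0 → cycNum ω (q - 1) a b = 1) ∧
    (1 + ζ ^ a + ζ ^ b ≠ 0 →
      Algebra.trace (ZMod 2) K (ζ ^ a / (1 + ζ ^ a + ζ ^ b) ^ 2) = 0 →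
      cycNum ω (q - 1) a b = 0) ∧
    (1 + ζ ^ a + ζ ^ b ≠ 0 →
      Algebra.trace (ZMod 2) K (ζ ^ a / (1 + ζ ^ a + ζ ^ b) ^ 2) = 1 →
      cycNum ω (q - 1) a b = 2) := by
  rw [← Nat.card_eq_fintype_card] at hK hF
  subst hK
  have := isQuadraticExtension_of_natCard_eq_sq hF
  exact cycNum_r_two_char_two_general ω hω ζ hζ a b
end

section
/- Let q = p^n be a prime power, take r = 2 and k = q + 1. Then for every 0 ≤ a,b ≤ q−2, the cyclotomic number (a,b)_{q−1} over 𝔽_{q^2} belongs to {0, 1, 2}. -/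
/-!
The map `x ↦ x ^ (q + 1)`, the norm from `𝔽_{q²}` to `𝔽_q`, is constant on each coset of
`⟨ω ^ (q - 1)⟩`, so every `x` counted by `(a, b)_{q - 1}` has a prescribed norm `A`, and `x + 1` has
a prescribed norm `B`. The conjugate `x ^ q` then satisfies `x * x ^ q = A` and
`x + x ^ q = B - A - 1`, so `x` is a root of `X ^ 2 - (B - A - 1) X + A`.
-/

open Polynomial

theorem InCycCoset.pow_eq {F : Type*} [Field F] {ω x : Fˣ} {e a k : ℕ}
    (hx : InCycCoset ω e a x) (hω : ω ^ (e * k) = 1) : x ^ k = ω ^ (a * k) := by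
  obtain ⟨m, rfl⟩ := hx
  rw [mul_pow, pow_right_comm (ω ^ e), ← pow_mul, ← pow_mul ω e k, hω, one_pow, mul_one]

theorem encard_quadratic_roots_le_two {R : Type*} [CommRing R] [IsDomain R] {a : R} (ha : a ≠ 0)
    (b c : R) : {x : R | a * x ^ 2 + b * x + c = 0}.encard ≤ 2 := by
  set P : R[X] := C a * X ^ 2 + C b * X + C c with hP
  have hdeg : P.natDegree = 2 := natDegree_quadratic ha
  have hP0 : P ≠ 0 := ne_zero_of_natDegree_gt (hdeg ▸ two_pos)
  have hroots : {x : R | a * x ^ 2 + b * x + c = 0} = P.rootSet R := by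
    ext x
    rw [mem_rootSet, and_iff_right hP0]
    simp [hP]
  rw [hroots, ← (P.rootSet_finite R).cast_ncard_eq]
  exact_mod_cast hdeg ▸ P.ncard_rootSet_le R

theorem sq_add_mul_add_pow_expChar_pow_succ_eq_zero {R : Type*} [CommRing R] (p n : ℕ)
    [ExpChar R p] (x : R) :
    x ^ 2 + (x ^ (p ^ n + 1) + 1 - (x + 1) ^ (p ^ n + 1)) * x + x ^ (p ^ n + 1) = 0 := by
  have hfrob : (x + 1) ^ p ^ n = x ^ p ^ n + 1 := by rw [add_pow_expChar_pow, one_pow]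
  rw [pow_succ (x + 1), hfrob]
  ring

theorem encard_pow_eq_and_add_one_pow_eq_le_two {R : Type*} [CommRing R] [IsDomain R] (p n : ℕ)
    [ExpChar R p] (A B : R) :
    {x : R | x ^ (p ^ n + 1) = A ∧ (x + 1) ^ (p ^ n + 1) = B}.encard ≤ 2 := by
  refine (Set.encard_le_encard ?_).trans (encard_quadratic_roots_le_two one_ne_zero (A + 1 - B) A)
  rintro x ⟨rfl, rfl⟩
  rw [Set.mem_ofPred_eq, one_mul]
  exact sq_add_mul_add_pow_expChar_pow_succ_eq_zero p n x

theorem cycNum_r_two_mem_general {F : Type*} [Field F] {p n q : ℕ} [ExpChar F p] (hq : q = p ^ n)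
    (ω : Fˣ) (hω : ω ^ (q ^ 2 - 1) = 1) (a b : ℕ) :
    cycNum ω (q - 1) a b ∈ ({0, 1, 2} : Set ℕ) := by
  have hω' : ω ^ ((q - 1) * (q + 1)) = 1 := by
    rwa [mul_comm, ← Nat.sq_sub_sq, one_pow]
  have hmaps : Set.MapsTo ((↑) : Fˣ → F)
      {x | InCycCoset ω (q - 1) a x ∧ ∃ y, InCycCoset ω (q - 1) b y ∧ (y : F) = (x : F) + 1}
      {x | x ^ (q + 1) = ↑(ω ^ (a * (q + 1))) ∧ (x + 1) ^ (q + 1) = ↑(ω ^ (b * (q + 1)))} := by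
    rintro x ⟨hx, y, hy, hyx⟩
    exact ⟨by rw [← hx.pow_eq hω', Units.val_pow_eq_pow_val],
      by rw [← hyx, ← hy.pow_eq hω', Units.val_pow_eq_pow_val]⟩
  have hle : cycNum ω (q - 1) a b ≤ 2 := by
    subst hq
    exact ENat.toNat_le_of_le_natCast <|
      (Set.encard_le_encard_of_injOn hmaps Units.val_injective.injOn).trans
        (encard_pow_eq_and_add_one_pow_eq_le_two p n _ _)
  simp only [Set.mem_insert_iff, Set.mem_singleton_iff]
  lia

/-- For a prime power `q` and `r = 2`, every cyclotomic number `(a,b)_{q-1}` over `𝔽_{q^2}`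
belongs to `{0, 1, 2}`. -/
theorem cycNum_r_two_mem {p n q : ℕ} (hp : p.Prime) (hn : 1 ≤ n) (hq : q = p ^ n)
    {F : Type*} [Field F] [Fintype F] (hF : Fintype.card F = q ^ 2)
    (ω : Fˣ) (hω : ∀ x : Fˣ, x ∈ Subgroup.zpowers ω)
    (a b : ℕ) (ha : a ≤ q - 2) (hb : b ≤ q - 2) :
    cycNum ω (q - 1) a b ∈ ({0, 1, 2} : Set ℕ) := by
  have : Fact p.Prime := ⟨hp⟩
  have : CharP F p := charP_of_card_eq_prime_pow (f := n * 2) (by rw [hF, hq, pow_mul])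
  classical
  exact cycNum_r_two_mem_general hq ω (by rw [← hF, ← Fintype.card_units, pow_card_eq_one]) a b
end
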